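/- Admissibility of the up fragment: each of the up rules ai↑ (replace (a;ā) by ∘), q↑ (replace (⟨R;T⟩;⟨U;V⟩) by ⟨(R;U);(T;V)⟩), and r↑ (replace (⌊a⌋R;⌊a⌋T) by ⌊a⌋(R;T)) is admissible for BVr: every structure provable in BVr extended with any of these up rules is already provable in BVr. -/

import Mathlib

namespace DI

/-- SBVr structures: unit, atoms and their duals, par, copar, seq, renaming binder. -/
inductive Struct : Type
  | unit : Struct
  | atom : ℕ → Struct
  | natom : ℕ → Struct
  | par : Struct → Struct → Struct
  | copar : Struct → Struct → Struct
  | seq : Struct → Struct → Struct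
  | ren : ℕ → Struct → Struct
  deriving DecidableEq

namespace Struct

/-- Negation of structures (De Morgan: swaps par/copar, fixes seq and renaming). -/
def neg : Struct → Struct
  | unit => unit
  | atom a => natom a
  | natom a => atom a
  | par R T => copar R.neg T.neg
  | copar R T => par R.neg T.neg
  | seq R T => seq R.neg T.neg
  | ren a R => ren a R.neg

/-- Free atom names of a structure. -/
def free : Struct → Finset ℕ
  | unit => ∅
  | atom a => {a}
  | natom a => {a}
  | par R T => R.free ∪ T.free
  | copar R T => R.free ∪ T.free
  | seq R T => R.free ∪ T.free
  | ren a R => R.free.erase a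

/-- All atom names occurring in a structure (free, bound, and binder names). -/
def names : Struct → Finset ℕ
  | unit => ∅
  | atom a => {a}
  | natom a => {a}
  | par R T => R.names ∪ T.names
  | copar R T => R.names ∪ T.names
  | seq R T => R.names ∪ T.names
  | ren a R => insert a R.names

/-- `rename b a R` is `R{b/a}`: replace each free occurrence of atom `a` by `b`
(and `ā` by `b̄`). -/
def rename (b a : ℕ) : Struct → Struct
  | unit => unit
  | atom c => if c = a then atom b else atom c
  | natom c => if c = a then natom b else natom c
  | par R T => par (rename b a R) (rename b a T)
  | copar R T => copar (rename b a R) (rename b a T)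
  | seq R T => seq (rename b a R) (rename b a T)
  | ren c R => if c = a then ren c R else ren c (rename b a R)

/-- Size of a structure: the number of occurrences of atoms in it. -/
def size : Struct → ℕ
  | unit => 0
  | atom _ => 1
  | natom _ => 1
  | par R T => R.size + T.size
  | copar R T => R.size + T.size
  | seq R T => R.size + T.size
  | ren _ R => R.size

end Struct

open Struct

/-- Structural congruence on structures. -/
inductive Cong : Struct → Struct → Prop
  | refl (R) : Cong R R
  | symm : Cong R T → Cong T R
  | trans : Cong R T → Cong T U → Cong R U
  | par_congr : Cong R R' → Cong T T' → Cong (par R T) (par R' T')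
  | copar_congr : Cong R R' → Cong T T' → Cong (copar R T) (copar R' T')
  | seq_congr : Cong R R' → Cong T T' → Cong (seq R T) (seq R' T')
  | ren_congr (a) : Cong R R' → Cong (ren a R) (ren a R')
  | par_comm (R T) : Cong (par R T) (par T R)
  | par_assoc (R T U) : Cong (par (par R T) U) (par R (par T U))
  | par_unit (R) : Cong (par R unit) R
  | copar_comm (R T) : Cong (copar R T) (copar T R)
  | copar_assoc (R T U) : Cong (copar (copar R T) U) (copar R (copar T U))
  | copar_unit (R) : Cong (copar R unit) R
  | seq_assoc (R T U) : Cong (seq (seq R T) U) (seq R (seq T U))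
  | seq_unit_r (R) : Cong (seq R unit) R
  | seq_unit_l (R) : Cong (seq unit R) R
  /-- `R ≈ ⌊a⌋(R{a/b})` for a capture-free substitution of `a` for `b`. -/
  | ren_intro (a b : ℕ) (R : Struct) : a ∉ R.names →
      Cong R (ren a (R.rename a b))
  /-- α-equivalence of renaming. -/
  | ren_alpha (a b : ℕ) (R : Struct) : a ∉ R.names →
      Cong (ren b R) (ren a (R.rename a b))
  /-- Vacuous renaming. -/
  | ren_vac (a : ℕ) (R : Struct) : a ∉ R.free → Cong (ren a R) R
  /-- Commutation of renaming binders. -/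
  | ren_comm (a b : ℕ) (R : Struct) : Cong (ren a (ren b R)) (ren b (ren a R))

/-- Names of the inference rules of SBVr. -/
inductive RuleName : Type
  | aiDown | qDown | sw | rDown | aiUp | qUp | rUp
  deriving DecidableEq

/-- Shallow rule instances, read top-down: `Shallow ρ T R` means the rule `ρ`
has premise `T` and conclusion `R`. -/
inductive Shallow : RuleName → Struct → Struct → Prop
  | aiDown (a) : Shallow .aiDown unit (par (atom a) (natom a))
  | qDown (R T U V) :
      Shallow .qDown (seq (par R T) (par U V)) (par (seq R U) (seq T V))
  | sw (R T U) : Shallow .sw (copar (par R U) T) (par (copar R T) U)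
  | rDown (a R T) :
      Shallow .rDown (ren a (par R T)) (par (ren a R) (ren a T))
  | aiUp (a) : Shallow .aiUp (copar (atom a) (natom a)) unit
  | qUp (R T U V) :
      Shallow .qUp (copar (seq R T) (seq U V)) (seq (copar R U) (copar T V))
  | rUp (a R T) :
      Shallow .rUp (copar (ren a R) (ren a T)) (ren a (copar R T))

/-- Closure of a (premise, conclusion) relation under arbitrary contexts
and structural congruence. -/
inductive CtxClosure (r : Struct → Struct → Prop) : Struct → Struct → Prop
  | base : r T R → CtxClosure r T R
  | parL (U) : CtxClosure r T R → CtxClosure r (par T U) (par R U)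
  | parR (U) : CtxClosure r T R → CtxClosure r (par U T) (par U R)
  | coparL (U) : CtxClosure r T R → CtxClosure r (copar T U) (copar R U)
  | coparR (U) : CtxClosure r T R → CtxClosure r (copar U T) (copar U R)
  | seqL (U) : CtxClosure r T R → CtxClosure r (seq T U) (seq R U)
  | seqR (U) : CtxClosure r T R → CtxClosure r (seq U T) (seq U R)
  | ren (a) : CtxClosure r T R → CtxClosure r (ren a T) (ren a R)
  | congr : Cong T T' → CtxClosure r T' R' → Cong R' R → CtxClosure r T R

/-- One inference step in a system given by a set of rule names. -/
def Step (rules : RuleName → Prop) : Struct → Struct → Prop :=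
  CtxClosure (fun T R => ∃ ρ, rules ρ ∧ Shallow ρ T R)

/-- `Deriv rules T R`: there is a derivation in the system `rules` with
premise `T` and conclusion `R` (a finite composition of rule instances,
modulo structural congruence). -/
def Deriv (rules : RuleName → Prop) (T R : Struct) : Prop :=
  Relation.ReflTransGen (fun X Y => Step rules X Y ∨ Cong X Y) T R

/-- `Prov rules R`: `R` is provable, i.e. derivable from the unit. -/
def Prov (rules : RuleName → Prop) (R : Struct) : Prop :=
  Deriv rules unit R

/-- The system BVr: the down rules ai↓, q↓, s, r↓. -/
def BVr : RuleName → Prop := fun ρ =>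
  ρ = .aiDown ∨ ρ = .qDown ∨ ρ = .sw ∨ ρ = .rDown

/-- The system SBVr: BVr plus the up rules ai↑, q↑, r↑. -/
def SBVr : RuleName → Prop := fun _ => True

/-- The system SBV: the renaming-free fragment ai↓, q↓, s, ai↑, q↑. -/
def SBV : RuleName → Prop := fun ρ => ρ ≠ .rDown ∧ ρ ≠ .rUp

/-- BVr extended with the up rule q↑. -/
def BVrQ : RuleName → Prop := fun ρ => BVr ρ ∨ ρ = .qUp

/-- Contexts: structures with a single hole. -/
inductive Ctx : Type
  | hole : Ctx
  | parL (C : Ctx) (U : Struct) : Ctx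
  | parR (U : Struct) (C : Ctx) : Ctx
  | coparL (C : Ctx) (U : Struct) : Ctx
  | coparR (U : Struct) (C : Ctx) : Ctx
  | seqL (C : Ctx) (U : Struct) : Ctx
  | seqR (U : Struct) (C : Ctx) : Ctx
  | ren (a : ℕ) (C : Ctx) : Ctx

/-- Filling the hole of a context with a structure. -/
def Ctx.fill : Ctx → Struct → Struct
  | .hole, V => V
  | .parL C U, V => .par (C.fill V) U
  | .parR U C, V => .par U (C.fill V)
  | .coparL C U, V => .copar (C.fill V) U
  | .coparR U C, V => .copar U (C.fill V)
  | .seqL C U, V => .seq (C.fill V) U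
  | .seqR U C, V => .seq U (C.fill V)
  | .ren a C, V => .ren a (C.fill V)

/-- The renaming binders a context places over its hole. -/
def Ctx.binders : Ctx → Finset ℕ
  | .hole => ∅
  | .parL C _ => C.binders
  | .parR _ C => C.binders
  | .coparL C _ => C.binders
  | .coparR _ C => C.binders
  | .seqL C _ => C.binders
  | .seqR _ C => C.binders
  | .ren a C => insert a C.binders

/-- Lambda terms with explicit substitutions:
variables, abstractions, applications, and explicit substitutions `M⟨x:=P⟩`. -/
inductive Term : Type
  | var : ℕ → Term
  | lam : ℕ → Term → Term
  | app : Term → Term → Term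
  | esub : Term → ℕ → Term → Term
  deriving DecidableEq

namespace Term

/-- Free variables of a term. -/
def fv : Term → Finset ℕ
  | var x => {x}
  | lam x M => M.fv.erase x
  | app M N => M.fv ∪ N.fv
  | esub M x P => M.fv.erase x ∪ P.fv

/-- All variable names occurring in a term (free or bound). -/
def names : Term → Finset ℕ
  | var x => {x}
  | lam x M => insert x M.names
  | app M N => M.names ∪ N.names
  | esub M x P => insert x (M.names ∪ P.names)

/-- Linearity: bound variables occur free in their scope exactly once, and the
free variables of the components of applications and substitutions are disjoint. -/
def Linear : Term → Prop
  | var _ => True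
  | lam x M => x ∈ M.fv ∧ M.Linear
  | app M N => M.Linear ∧ N.Linear ∧ Disjoint M.fv N.fv
  | esub M x P => x ∈ M.fv ∧ M.Linear ∧ P.Linear ∧ Disjoint M.fv P.fv

end Term

/-- β-reduction with explicit substitutions. -/
inductive Beta : Term → Term → Prop
  | intro (x M N) : Beta (.app (.lam x M) N) (.esub M x N)
  | var (x P) : Beta (.esub (.var x) x P) P
  | lam (y x M P) : Beta (.esub (.lam y M) x P) (.lam y (.esub M x P))
  | appR (M N x P) : x ∈ N.fv → Beta (.esub (.app M N) x P) (.app M (.esub N x P))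
  | appL (M N x P) : x ∈ M.fv → Beta (.esub (.app M N) x P) (.app (.esub M x P) N)

/-- The rewriting relation `M ⇒ N`: reflexive, contextual and transitive
closure of β-reduction with explicit substitutions. -/
inductive Red : Term → Term → Prop
  | refl (M) : Red M M
  | beta : Beta M N → Red M N
  | trans : Red M P → Red P N → Red M N
  | lam (x) : Red M N → Red (.lam x M) (.lam x N)
  | appL : Red M N → Red (.app M P) (.app N P)
  | appR : Red M N → Red (.app P M) (.app P N)
  | esubL (x) : Red M N → Red (.esub M x P) (.esub N x P)
  | esubR (x) : Red M N → Red (.esub P x M) (.esub P x N)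

/-- A name fresh for a given finite set of names. -/
def freshName (s : Finset ℕ) : ℕ := (s.sup id) + 1

/-- The map `⟦·⟧` from linear lambda terms with explicit substitutions to
SBVr structures; `Term.tr M o` is `⟦M⟧o`. -/
def Term.tr : Term → ℕ → Struct
  | .var x, o => .seq (.atom x) (.natom o)
  | .lam x M, o =>
      let p := freshName (insert o (insert x M.names))
      .ren x (.ren p (.par (M.tr p) (.copar (.atom p) (.natom o))))
  | .app M N, o =>
      let q := freshName (insert o (M.names ∪ N.names))
      let p := freshName (insert q (insert o (M.names ∪ N.names)))
      .ren p (.par (M.tr p) (.par (.ren q (N.tr q)) (.copar (.atom p) (.natom o))))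
  | .esub M x P, o => .ren x (.par (M.tr o) (P.tr x))

/-- The derived rules (premise, conclusion) on translated terms:
o-ren, s-intro, s-var, s-λ, s-@l, s-@r. -/
inductive DerivedRule : Struct → Struct → Prop
  | oren (M : Term) (o p : ℕ) : p ∉ M.names → p ≠ o →
      DerivedRule (M.tr o) (.par (M.tr p) (.copar (.atom p) (.natom o)))
  | sIntro (M N : Term) (x o : ℕ) :
      DerivedRule ((Term.esub M x N).tr o) ((Term.app (.lam x M) N).tr o)
  | sVar (P : Term) (x o : ℕ) :
      DerivedRule (P.tr o) ((Term.esub (.var x) x P).tr o)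
  | sLam (M P : Term) (x y o : ℕ) :
      DerivedRule ((Term.lam y (.esub M x P)).tr o) ((Term.esub (.lam y M) x P).tr o)
  | sAppL (M N P : Term) (x o : ℕ) : x ∈ M.fv →
      DerivedRule ((Term.app (.esub M x P) N).tr o) ((Term.esub (.app M N) x P).tr o)
  | sAppR (M N P : Term) (x o : ℕ) : x ∈ N.fv →
      DerivedRule ((Term.app M (.esub N x P)).tr o) ((Term.esub (.app M N) x P).tr o)

/-- Derivations composed only of instances of the derived rules
(applied in arbitrary contexts, modulo congruence). -/
def DerivedDeriv : Struct → Struct → Prop :=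
  Relation.ReflTransGen (fun X Y => CtxClosure DerivedRule X Y ∨ Cong X Y)

end DI

namespace DI

section Helpers

open Struct

/-! ### Derivations are closed under contexts -/

theorem Deriv.ofCong {rules : RuleName → Prop} {X Y : Struct} (h : Cong X Y) :
    Deriv rules X Y := Relation.ReflTransGen.single (Or.inr h)

theorem Deriv.ofShallow {X Y : Struct} {ρ : RuleName} (hρ : BVr ρ) (h : Shallow ρ X Y) :
    Deriv BVr X Y :=
  Relation.ReflTransGen.single (Or.inl (CtxClosure.base ⟨ρ, hρ, h⟩))

theorem Deriv.tr {rules : RuleName → Prop} {X Y Z : Struct} (h : Deriv rules X Y)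
    (h' : Deriv rules Y Z) : Deriv rules X Z := Relation.ReflTransGen.trans h h'

theorem Deriv.map {rules : RuleName → Prop} (f : Struct → Struct)
    (h1 : ∀ X Y, Step rules X Y → Step rules (f X) (f Y))
    (h2 : ∀ X Y, Cong X Y → Cong (f X) (f Y)) {X Y : Struct} (h : Deriv rules X Y) :
    Deriv rules (f X) (f Y) := by
  unfold Deriv at h ⊢
  induction h with
  | refl => exact Relation.ReflTransGen.refl
  | tail _ hab ih =>
    refine ih.tail ?_
    rcases hab with s | c
    · exact Or.inl (h1 _ _ s)
    · exact Or.inr (h2 _ _ c)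

theorem Deriv.parM {X Y X' Y' : Struct} (h : Deriv BVr X Y) (h' : Deriv BVr X' Y') :
    Deriv BVr (par X X') (par Y Y') :=
  Deriv.tr
    (Deriv.map (fun Z => Struct.par Z X') (fun _ _ s => CtxClosure.parL _ s)
      (fun _ _ c => Cong.par_congr c (Cong.refl _)) h)
    (Deriv.map (fun Z => Struct.par Y Z) (fun _ _ s => CtxClosure.parR _ s)
      (fun _ _ c => Cong.par_congr (Cong.refl _) c) h')

theorem Deriv.coparM {X Y X' Y' : Struct} (h : Deriv BVr X Y) (h' : Deriv BVr X' Y') :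
    Deriv BVr (copar X X') (copar Y Y') :=
  Deriv.tr
    (Deriv.map (fun Z => Struct.copar Z X') (fun _ _ s => CtxClosure.coparL _ s)
      (fun _ _ c => Cong.copar_congr c (Cong.refl _)) h)
    (Deriv.map (fun Z => Struct.copar Y Z) (fun _ _ s => CtxClosure.coparR _ s)
      (fun _ _ c => Cong.copar_congr (Cong.refl _) c) h')

theorem Deriv.seqM {X Y X' Y' : Struct} (h : Deriv BVr X Y) (h' : Deriv BVr X' Y') :
    Deriv BVr (seq X X') (seq Y Y') :=
  Deriv.tr
    (Deriv.map (fun Z => Struct.seq Z X') (fun _ _ s => CtxClosure.seqL _ s)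
      (fun _ _ c => Cong.seq_congr c (Cong.refl _)) h)
    (Deriv.map (fun Z => Struct.seq Y Z) (fun _ _ s => CtxClosure.seqR _ s)
      (fun _ _ c => Cong.seq_congr (Cong.refl _) c) h')

theorem dq (R T U V : Struct) :
    Deriv BVr (seq (par R T) (par U V)) (par (seq R U) (seq T V)) :=
  Deriv.ofShallow (Or.inr (Or.inl rfl)) (Shallow.qDown R T U V)

theorem dsw (R T U : Struct) : Deriv BVr (copar (par R U) T) (par (copar R T) U) :=
  Deriv.ofShallow (Or.inr (Or.inr (Or.inl rfl))) (Shallow.sw R T U)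

theorem dai (a : ℕ) : Deriv BVr unit (par (atom a) (natom a)) :=
  Deriv.ofShallow (Or.inl rfl) (Shallow.aiDown a)

/-! ### Collapse of renaming and of atom names under the congruence -/

theorem Cong.ren_triv (b : ℕ) (R : Struct) : Cong R (ren b R) := by
  obtain ⟨a, ha⟩ := Infinite.exists_notMem_finset R.names
  exact (Cong.ren_intro a b R ha).trans (Cong.ren_alpha a b R ha).symm

theorem Cong.atom_eq (a b : ℕ) : Cong (atom a) (atom b) := by
  obtain ⟨c, hc⟩ := Infinite.exists_notMem_finset ({a, b} : Finset ℕ)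
  simp only [Finset.mem_insert, Finset.mem_singleton, not_or] at hc
  have h1 := Cong.ren_intro c a (atom a) (by simpa [Struct.names] using hc.1)
  have h2 := Cong.ren_intro c b (atom b) (by simpa [Struct.names] using hc.2)
  simp only [Struct.rename, if_true] at h1 h2
  exact h1.trans h2.symm

theorem Cong.natom_eq (a b : ℕ) : Cong (natom a) (natom b) := by
  obtain ⟨c, hc⟩ := Infinite.exists_notMem_finset ({a, b} : Finset ℕ)
  simp only [Finset.mem_insert, Finset.mem_singleton, not_or] at hc
  have h1 := Cong.ren_intro c a (natom a) (by simpa [Struct.names] using hc.1)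
  have h2 := Cong.ren_intro c b (natom b) (by simpa [Struct.names] using hc.2)
  simp only [Struct.rename, if_true] at h1 h2
  exact h1.trans h2.symm

theorem Cong.right_comm (a b c : Struct) : Cong (par (par a b) c) (par (par a c) b) :=
  (Cong.par_assoc a b c).trans
    ((Cong.par_congr (Cong.refl a) (Cong.par_comm b c)).trans (Cong.par_assoc a c b).symm)

/-! ### The Chu-style model: sets of structures closed under BVr derivation -/

/-- Sets of structures closed under derivability. -/
def Low (A : Set Struct) : Prop := ∀ x y, y ∈ A → Deriv BVr y x → x ∈ A

theorem Low.cong {A : Set Struct} (h : Low A) {x y : Struct} (hy : y ∈ A) (c : Cong y x) :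
    x ∈ A := h x y hy (Deriv.ofCong c)

/-- Elements of the model. -/
@[ext] structure Chu where
  P : Set Struct
  N : Set Struct
  lowP : Low P
  lowN : Low N
  ok : ∀ p ∈ P, ∀ n ∈ N, Prov BVr (par p n)

/-- The provable structures. -/
def KK : Set Struct := {x | Prov BVr x}

theorem low_KK : Low KK := fun _ _ hy h => Deriv.tr hy h

/-- Pointwise product along par. -/
def mulP (A B : Set Struct) : Set Struct := {x | ∃ a ∈ A, ∃ b ∈ B, Deriv BVr (par a b) x}

/-- Pointwise product along seq. -/
def mulS (A B : Set Struct) : Set Struct := {x | ∃ a ∈ A, ∃ b ∈ B, Deriv BVr (seq a b) x}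

/-- Residual along par. -/
def imp (A B : Set Struct) : Set Struct := {x | ∀ a ∈ A, par x a ∈ B}

theorem low_mulP (A B : Set Struct) : Low (mulP A B) :=
  fun _ _ ⟨a, ha, b, hb, h⟩ h' => ⟨a, ha, b, hb, Deriv.tr h h'⟩

theorem low_mulS (A B : Set Struct) : Low (mulS A B) :=
  fun _ _ ⟨a, ha, b, hb, h⟩ h' => ⟨a, ha, b, hb, Deriv.tr h h'⟩

theorem Low.imp {A B : Set Struct} (h : Low B) : Low (imp A B) :=
  fun _ _ hy hd a ha => h _ _ (hy a ha) (Deriv.parM hd (Relation.ReflTransGen.refl))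

theorem Low.inter {A B : Set Struct} (h : Low A) (h' : Low B) : Low (A ∩ B) :=
  fun x y hy hd => ⟨h x y hy.1 hd, h' x y hy.2 hd⟩

theorem drefl (x : Struct) : Deriv BVr x x := Relation.ReflTransGen.refl

namespace Chu

def neg (A : Chu) : Chu where
  P := A.N
  N := A.P
  lowP := A.lowN
  lowN := A.lowP
  ok := fun p hp n hn => Deriv.tr (A.ok n hn p hp) (Deriv.ofCong (Cong.par_comm _ _))

def one : Chu where
  P := KK
  N := KK
  lowP := low_KK
  lowN := low_KK
  ok := fun _ hp _ hn =>
    Deriv.tr (Deriv.ofCong (Cong.par_unit unit).symm) (Deriv.parM hp hn)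

def parr (A B : Chu) : Chu where
  P := imp A.N B.P ∩ imp B.N A.P
  N := mulP A.N B.N
  lowP := B.lowP.imp.inter A.lowP.imp
  lowN := low_mulP _ _
  ok := by
    rintro p ⟨h1, -⟩ n ⟨a, ha, b, hb, hd⟩
    exact (B.ok _ (h1 a ha) b hb).tr
      ((Deriv.ofCong (Cong.par_assoc p a b)).tr (Deriv.parM (drefl p) hd))

def ten (A B : Chu) : Chu := (parr A.neg B.neg).neg

def sq (A B : Chu) : Chu where
  P := mulS A.P B.P
  N := mulS A.N B.N
  lowP := low_mulS _ _
  lowN := low_mulS _ _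
  ok := by
    rintro p ⟨a, ha, b, hb, h⟩ n ⟨a', ha', b', hb', h'⟩
    exact (Deriv.ofCong (Cong.seq_unit_r unit).symm).tr
      ((Deriv.seqM (A.ok a ha a' ha') (B.ok b hb b' hb')).tr
        ((dq _ _ _ _).tr (Deriv.parM h h')))

def at0 : Chu where
  P := {x | Deriv BVr (natom 0) x}
  N := {x | Deriv BVr (atom 0) x}
  lowP := fun _ _ h h' => Deriv.tr h h'
  lowN := fun _ _ h h' => Deriv.tr h h'
  ok := fun _ hp _ hn => (dai 0).tr
    ((Deriv.ofCong (Cong.par_comm _ _)).tr (Deriv.parM hp hn))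

/-- The order of the model. -/
def Le (A B : Chu) : Prop := A.P ⊆ B.P ∧ B.N ⊆ A.N

theorem Le.rfl' (A : Chu) : Le A A := ⟨fun _ h => h, fun _ h => h⟩

theorem Le.trans' {A B C : Chu} (h : Le A B) (h' : Le B C) : Le A C :=
  ⟨h.1.trans h'.1, h'.2.trans h.2⟩

theorem Le.neg {A B : Chu} (h : Le A B) : Le B.neg A.neg := ⟨h.2, h.1⟩

theorem Le.parr {A B C D : Chu} (h : Le A B) (h' : Le C D) : Le (parr A C) (parr B D) :=
  ⟨fun _ hx => ⟨fun a ha => h'.1 (hx.1 a (h.2 ha)), fun a ha => h.1 (hx.2 a (h'.2 ha))⟩,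
   fun _ ⟨a, ha, b, hb, hd⟩ => ⟨a, h.2 ha, b, h'.2 hb, hd⟩⟩

theorem Le.ten {A B C D : Chu} (h : Le A B) (h' : Le C D) : Le (ten A C) (ten B D) :=
  (Le.parr h.neg h'.neg).neg

theorem Le.sq {A B C D : Chu} (h : Le A B) (h' : Le C D) : Le (sq A C) (sq B D) :=
  ⟨fun _ ⟨a, ha, b, hb, hd⟩ => ⟨a, h.1 ha, b, h'.1 hb, hd⟩,
   fun _ ⟨a, ha, b, hb, hd⟩ => ⟨a, h.2 ha, b, h'.2 hb, hd⟩⟩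

theorem Le.antisymm {A B : Chu} (h : Le A B) (h' : Le B A) : A = B :=
  Chu.ext (h.1.antisymm h'.1) (h'.2.antisymm h.2)

theorem parr_comm_le (A B : Chu) : Le (parr A B) (parr B A) :=
  ⟨fun _ hx => ⟨hx.2, hx.1⟩,
   fun _ ⟨a, ha, b, hb, hd⟩ =>
    ⟨b, hb, a, ha, (Deriv.ofCong (Cong.par_comm _ _)).tr hd⟩⟩

theorem parr_comm (A B : Chu) : parr A B = parr B A :=
  (parr_comm_le A B).antisymm (parr_comm_le B A)

theorem parr_assoc_le (A B C : Chu) : Le (parr (parr A B) C) (parr A (parr B C)) := by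
  constructor
  · rintro x ⟨h1, h2⟩
    refine ⟨fun a ha => ⟨fun b hb => ?_, fun c hc => ?_⟩, ?_⟩
    · exact C.lowP.cong (h1 (par a b) ⟨a, ha, b, hb, drefl _⟩) (Cong.par_assoc x a b).symm
    · exact B.lowP.cong ((h2 c hc).1 a ha) (Cong.right_comm _ _ _)
    · rintro n ⟨b, hb, c, hc, hd⟩
      exact A.lowP _ _ ((h2 c hc).2 b hb)
        ((Deriv.ofCong ((Cong.right_comm _ _ _).trans (Cong.par_assoc _ _ _))).tr
          (Deriv.parM (drefl x) hd))
  · rintro x ⟨a, ha, y, ⟨b, hb, c, hc, hd⟩, hd'⟩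
    exact ⟨par a b, ⟨a, ha, b, hb, drefl _⟩, c, hc,
      (Deriv.ofCong (Cong.par_assoc _ _ _)).tr ((Deriv.parM (drefl a) hd).tr hd')⟩

theorem parr_assoc (A B C : Chu) : parr (parr A B) C = parr A (parr B C) := by
  refine (parr_assoc_le A B C).antisymm ?_
  rw [parr_comm A (parr B C), parr_comm B C, parr_comm (parr A B) C, parr_comm A B]
  exact parr_assoc_le C B A

theorem parr_one (A : Chu) : parr A one = A := by
  refine Le.antisymm ⟨fun x hx => ?_, fun x hx => ?_⟩ ⟨fun x hx => ⟨?_, ?_⟩, ?_⟩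
  · exact A.lowP.cong (hx.2 unit (drefl unit)) (Cong.par_unit x)
  · exact ⟨x, hx, unit, drefl unit, Deriv.ofCong (Cong.par_unit x)⟩
  · exact fun a ha => A.ok x hx a ha
  · exact fun k hk => A.lowP _ _ hx
      ((Deriv.ofCong (Cong.par_unit x).symm).tr (Deriv.parM (drefl x) hk))
  · rintro x ⟨a, ha, k, hk, hd⟩
    exact A.lowN _ _ ha
      ((Deriv.ofCong (Cong.par_unit a).symm).tr ((Deriv.parM (drefl a) hk).tr hd))

theorem ten_comm (A B : Chu) : ten A B = ten B A :=
  congrArg neg (parr_comm A.neg B.neg)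

theorem ten_assoc (A B C : Chu) : ten (ten A B) C = ten A (ten B C) :=
  congrArg neg (parr_assoc A.neg B.neg C.neg)

theorem ten_one (A : Chu) : ten A one = A :=
  congrArg neg (parr_one A.neg)

theorem mulS_assoc (A B C : Set Struct) : mulS (mulS A B) C = mulS A (mulS B C) := by
  ext x
  constructor
  · rintro ⟨y, ⟨a, ha, b, hb, hd⟩, c, hc, hd'⟩
    exact ⟨a, ha, seq b c, ⟨b, hb, c, hc, drefl _⟩,
      (Deriv.ofCong (Cong.seq_assoc _ _ _).symm).tr ((Deriv.seqM hd (drefl c)).tr hd')⟩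
  · rintro ⟨a, ha, y, ⟨b, hb, c, hc, hd⟩, hd'⟩
    exact ⟨seq a b, ⟨a, ha, b, hb, drefl _⟩, c, hc,
      (Deriv.ofCong (Cong.seq_assoc _ _ _)).tr ((Deriv.seqM (drefl a) hd).tr hd')⟩

theorem mulS_KK {A : Set Struct} (h : Low A) : mulS A KK = A := by
  ext x
  constructor
  · rintro ⟨a, ha, k, hk, hd⟩
    exact h _ _ ha
      ((Deriv.ofCong (Cong.seq_unit_r a).symm).tr ((Deriv.seqM (drefl a) hk).tr hd))
  · exact fun hx => ⟨x, hx, unit, drefl unit, Deriv.ofCong (Cong.seq_unit_r x)⟩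

theorem KK_mulS {A : Set Struct} (h : Low A) : mulS KK A = A := by
  ext x
  constructor
  · rintro ⟨k, hk, a, ha, hd⟩
    exact h _ _ ha
      ((Deriv.ofCong (Cong.seq_unit_l a).symm).tr ((Deriv.seqM hk (drefl a)).tr hd))
  · exact fun hx => ⟨unit, drefl unit, x, hx, Deriv.ofCong (Cong.seq_unit_l x)⟩

theorem sq_assoc (A B C : Chu) : sq (sq A B) C = sq A (sq B C) :=
  Chu.ext (mulS_assoc _ _ _) (mulS_assoc _ _ _)

theorem sq_one (A : Chu) : sq A one = A := Chu.ext (mulS_KK A.lowP) (mulS_KK A.lowN)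

theorem one_sq (A : Chu) : sq one A = A := Chu.ext (KK_mulS A.lowP) (KK_mulS A.lowN)

theorem ax_le (A : Chu) : Le one (parr A A.neg) := by
  refine ⟨fun k hk => ⟨fun n hn => ?_, fun n hn => ?_⟩, ?_⟩
  · exact A.lowN _ _ hn ((Deriv.ofCong ((Cong.par_unit n).symm.trans (Cong.par_comm _ _))).tr
      (Deriv.parM hk (drefl n)))
  · exact A.lowP _ _ hn ((Deriv.ofCong ((Cong.par_unit n).symm.trans (Cong.par_comm _ _))).tr
      (Deriv.parM hk (drefl n)))
  · rintro x ⟨a, ha, b, hb, hd⟩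
    exact ((A.ok b hb a ha).tr (Deriv.ofCong (Cong.par_comm _ _))).tr hd

theorem q_le (A B C D : Chu) :
    Le (sq (parr A B) (parr C D)) (parr (sq A C) (sq B D)) := by
  constructor
  · rintro x ⟨y, hy, z, hz, hd⟩
    constructor
    · rintro n ⟨a, ha, c, hc, hd'⟩
      exact ⟨par y a, hy.1 a ha, par z c, hz.1 c hc, (dq _ _ _ _).tr (Deriv.parM hd hd')⟩
    · rintro n ⟨a, ha, c, hc, hd'⟩
      exact ⟨par y a, hy.2 a ha, par z c, hz.2 c hc, (dq _ _ _ _).tr (Deriv.parM hd hd')⟩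
  · rintro x ⟨y, ⟨a, ha, c, hc, hy⟩, z, ⟨b, hb, d, hd, hz⟩, hx⟩
    exact ⟨par a b, ⟨a, ha, b, hb, drefl _⟩, par c d, ⟨c, hc, d, hd, drefl _⟩,
      (dq _ _ _ _).tr ((Deriv.parM hy hz).tr hx)⟩

theorem sw_N (R T U : Chu) : (parr (ten R T) U).N ⊆ (ten (parr R U) T).N := by
  rintro w ⟨z, hz, u, hu, hd⟩
  constructor
  · intro x hx
    refine T.lowN _ _ (hz.1 (par x u) (hx.2 u hu)) (Deriv.tr (Deriv.ofCong ?_)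
      (Deriv.parM hd (drefl x)))
    exact (Cong.par_assoc z x u).symm.trans (Cong.right_comm _ _ _)
  · intro t ht
    exact ⟨par z t, hz.2 t ht, u, hu,
      (Deriv.ofCong (Cong.right_comm _ _ _)).tr (Deriv.parM hd (drefl t))⟩

theorem sw_le (R T U : Chu) : Le (ten (parr R U) T) (parr (ten R T) U) :=
  ⟨sw_N R.neg U.neg T.neg, sw_N R T U⟩

end Chu

/-- The interpretation of structures in the model. -/
def interp : Struct → Chu
  | .unit => Chu.one
  | .atom _ => Chu.at0
  | .natom _ => Chu.at0.neg
  | .par R T => Chu.parr (interp R) (interp T)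
  | .copar R T => Chu.ten (interp R) (interp T)
  | .seq R T => Chu.sq (interp R) (interp T)
  | .ren _ R => interp R

theorem interp_rename (b a : ℕ) (R : Struct) : interp (R.rename b a) = interp R := by
  induction R with
  | unit => rfl
  | atom c => simp only [Struct.rename]; split <;> rfl
  | natom c => simp only [Struct.rename]; split <;> rfl
  | par R T h1 h2 => simp only [Struct.rename, interp, h1, h2]
  | copar R T h1 h2 => simp only [Struct.rename, interp, h1, h2]
  | seq R T h1 h2 => simp only [Struct.rename, interp, h1, h2]
  | ren c R h =>
    simp only [Struct.rename]
    split
    · rfl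
    · simp only [interp, h]

theorem interp_cong {R T : Struct} (h : Cong R T) : interp R = interp T := by
  induction h with
  | refl => rfl
  | symm _ ih => exact ih.symm
  | trans _ _ h1 h2 => exact h1.trans h2
  | par_congr _ _ h1 h2 => simp only [interp, h1, h2]
  | copar_congr _ _ h1 h2 => simp only [interp, h1, h2]
  | seq_congr _ _ h1 h2 => simp only [interp, h1, h2]
  | ren_congr _ _ h => simpa only [interp] using h
  | par_comm => exact Chu.parr_comm _ _
  | par_assoc => exact Chu.parr_assoc _ _ _
  | par_unit => exact Chu.parr_one _
  | copar_comm => exact Chu.ten_comm _ _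
  | copar_assoc => exact Chu.ten_assoc _ _ _
  | copar_unit => exact Chu.ten_one _
  | seq_assoc => exact Chu.sq_assoc _ _ _
  | seq_unit_r => exact Chu.sq_one _
  | seq_unit_l => exact Chu.one_sq _
  | ren_intro a b R _ => exact (interp_rename a b R).symm
  | ren_alpha a b R _ => exact (interp_rename a b R).symm
  | ren_vac => rfl
  | ren_comm => rfl

theorem interp_shallow {ρ : RuleName} {T R : Struct} (h : Shallow ρ T R) :
    Chu.Le (interp T) (interp R) := by
  cases h with
  | aiDown a => exact Chu.ax_le _
  | qDown R T U V => exact Chu.q_le _ _ _ _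
  | sw R T U => exact Chu.sw_le _ _ _
  | rDown a R T => exact Chu.Le.rfl' _
  | aiUp a => exact (Chu.ax_le Chu.at0.neg).neg
  | qUp R T U V =>
    exact (Chu.q_le (interp R).neg (interp U).neg (interp T).neg (interp V).neg).neg
  | rUp a R T => exact Chu.Le.rfl' _

theorem interp_step {rules : RuleName → Prop} {T R : Struct} (h : Step rules T R) :
    Chu.Le (interp T) (interp R) := by
  unfold Step at h
  induction h with
  | base h => obtain ⟨ρ, _, h⟩ := h; exact interp_shallow h
  | parL U _ ih => exact ih.parr (Chu.Le.rfl' _)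
  | parR U _ ih => exact (Chu.Le.rfl' _).parr ih
  | coparL U _ ih => exact ih.ten (Chu.Le.rfl' _)
  | coparR U _ ih => exact (Chu.Le.rfl' _).ten ih
  | seqL U _ ih => exact ih.sq (Chu.Le.rfl' _)
  | seqR U _ ih => exact (Chu.Le.rfl' _).sq ih
  | ren a _ ih => exact ih
  | congr c _ c' ih => rw [interp_cong c, ← interp_cong c']; exact ih

theorem interp_deriv {rules : RuleName → Prop} {T R : Struct} (h : Deriv rules T R) :
    Chu.Le (interp T) (interp R) := by
  unfold Deriv at h
  induction h with
  | refl => exact Chu.Le.rfl' _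
  | tail _ h ih =>
    refine ih.trans' ?_
    rcases h with h | h
    · exact interp_step h
    · rw [interp_cong h]; exact Chu.Le.rfl' _

/-- A provable left factor of a copar can be discarded upwards. -/
theorem copar_cut {X T : Struct} (h : Prov BVr X) : Deriv BVr T (copar X T) :=
  (Deriv.ofCong ((Cong.copar_unit T).symm.trans (Cong.copar_comm _ _))).tr
    (Deriv.coparM h (drefl T))

theorem self_mem (R : Struct) : R ∈ (interp R).N := by
  induction R with
  | unit => exact drefl unit
  | atom a => exact Deriv.ofCong (Cong.atom_eq 0 a)
  | natom a => exact Deriv.ofCong (Cong.natom_eq 0 a)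
  | par R T h1 h2 => exact ⟨R, h1, T, h2, drefl _⟩
  | seq R T h1 h2 => exact ⟨R, h1, T, h2, drefl _⟩
  | ren a R h => exact (interp R).lowN.cong h (Cong.ren_triv a R)
  | copar R T h1 h2 =>
    constructor
    · intro x hx
      refine (interp T).lowN _ _ h2 ((copar_cut ?_).tr (dsw R T x))
      exact ((interp R).ok x hx R h1).tr (Deriv.ofCong (Cong.par_comm _ _))
    · intro x hx
      refine (interp R).lowN _ _ h1 ((copar_cut ?_).tr ((dsw T R x).tr
        (Deriv.ofCong (Cong.par_congr (Cong.copar_comm _ _) (Cong.refl _)))))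
      exact ((interp T).ok x hx T h2).tr (Deriv.ofCong (Cong.par_comm _ _))

end Helpers

/-- Admissibility of the up fragment: each of ai↑, q↑, r↑ is admissible for BVr:
every structure provable in BVr extended with any of these up rules is already
provable in BVr. -/
theorem up_fragment_admissible (ρ : RuleName)
    (hρ : ρ = .aiUp ∨ ρ = .qUp ∨ ρ = .rUp) (R : Struct)
    (h : Prov (fun σ => BVr σ ∨ σ = ρ) R) : Prov BVr R := by
  exact (interp_deriv h).2 (self_mem R)

end DI
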